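/- Let $R$ be a commutative ring, let $n \ge 1$, let $t_0, t_1, \dots, t_n \in R$, and let $k \ge 0$ be a natural number. Let $M$ be the $(n+1) \times (n+1)$ matrix whose $i$-th row (for $i = 0,1,\dots,n$) is $(t_i^{\,n+k},\; t_i^{\,n-1},\; t_i^{\,n-2},\; \dots,\; t_i,\; 1)$. Then $\det M = h_k(t_0,\dots,t_n) \cdot \prod_{0 \le i < j \le n} (t_i - t_j)$, where $h_k(t_0,\dots,t_n) = \sum_{0 \le i_1 \le i_2 \le \dots \le i_k \le n} t_{i_1} t_{i_2} \cdots t_{i_k}$ is the complete homogeneous symmetric polynomial of degree $k$ (with $h_0 = 1$). -/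

import Mathlib

/-- The complete homogeneous symmetric polynomial of degree `k` in the variables
`t i`, `i : ι`: the sum of all monomials of degree `k` (with `h 0 = 1`). -/
noncomputable def completeHomogeneous {ι : Type*} [Fintype ι] [DecidableEq ι]
    {R : Type*} [CommRing R] (k : ℕ) (t : ι → R) : R :=
  ∑ mlt ∈ (Finset.univ : Finset ι).sym k, ((mlt : Multiset ι).map t).prod

/-!
Newton interpolation of `x ^ (n + k)` at nodes `t₁, …, tₙ` has error term
`h_k(x, t₁, …, tₙ) * ∏ j, (x - tⱼ)`, because the divided differences of power functions are
complete homogeneous polynomials. Interpolating at `t₀` as well only changes `h_k(x, t₁, …, tₙ)` to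
the constant `h_k(t₀, …, tₙ)`, so on all the nodes the `(n + k)`-th power agrees with a polynomial
of degree at most `n` whose coefficient in degree `n` is `h_k(t₀, …, tₙ)`. Modulo the other columns
of the determinant, which are the lower powers, only this coefficient matters.
-/

section CompleteHomogeneous

variable {ι κ R : Type*} [Fintype ι] [DecidableEq ι] [Fintype κ] [DecidableEq κ] [CommRing R]

theorem completeHomogeneous_eq_sum_sym (k : ℕ) (t : ι → R) :
    completeHomogeneous k t = ∑ s : Sym ι k, ((s : Multiset ι).map t).prod := by
  rw [completeHomogeneous, Finset.sym_univ]

theorem completeHomogeneous_zero (t : ι → R) : completeHomogeneous 0 t = 1 := by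
  rw [completeHomogeneous, Finset.sym_zero, Finset.sum_singleton]
  exact Multiset.prod_zero

theorem completeHomogeneous_of_unique [Unique ι] (k : ℕ) (t : ι → R) :
    completeHomogeneous k t = t default ^ k := by
  rw [completeHomogeneous_eq_sum_sym, Fintype.sum_subsingleton _ (Sym.replicate k default),
    Sym.coe_replicate, Multiset.map_replicate, Multiset.prod_replicate]

theorem completeHomogeneous_comp_equiv (e : κ ≃ ι) (k : ℕ) (t : ι → R) :
    completeHomogeneous k (t ∘ e) = completeHomogeneous k t := by
  simp only [completeHomogeneous_eq_sum_sym]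
  refine Fintype.sum_equiv (Sym.equivCongr e) _ _ fun s => ?_
  simp [Sym.equivCongr, Multiset.map_map]

theorem completeHomogeneous_succ_option (k : ℕ) (t : Option ι → R) :
    completeHomogeneous (k + 1) t =
      t none * completeHomogeneous k t + completeHomogeneous (k + 1) (t ∘ some) := by
  simp only [completeHomogeneous_eq_sum_sym]
  rw [← symOptionSuccEquiv.symm.sum_comp, Fintype.sum_sum_type, Finset.mul_sum]
  congr 1 <;> refine Fintype.sum_congr _ _ fun s => ?_
  · simp only [symOptionSuccEquiv, Equiv.coe_fn_symm_mk, SymOptionSuccEquiv.decode_inl]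
    rw [Sym.coe_cons, Multiset.map_cons, Multiset.prod_cons]
  · simp [symOptionSuccEquiv, Multiset.map_map]

theorem completeHomogeneous_succ_cons {m : ℕ} (k : ℕ) (x : R) (s : Fin m → R) :
    completeHomogeneous (k + 1) (Fin.cons x s : Fin (m + 1) → R) =
      x * completeHomogeneous k (Fin.cons x s : Fin (m + 1) → R) +
        completeHomogeneous (k + 1) s := by
  have hsome : (Fin.cons x s : Fin (m + 1) → R) ∘ (finSuccEquiv m).symm ∘ some = s := by
    ext i
    simp
  simpa only [completeHomogeneous_comp_equiv, Function.comp_assoc, hsome, Function.comp_apply,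
    finSuccEquiv_symm_none, Fin.cons_zero] using
    completeHomogeneous_succ_option k ((Fin.cons x s : Fin (m + 1) → R) ∘ (finSuccEquiv m).symm)

theorem completeHomogeneous_cons_sub_cons {m : ℕ} (k : ℕ) (x y : R) (s : Fin m → R) :
    completeHomogeneous (k + 1) (Fin.cons x s : Fin (m + 1) → R) -
        completeHomogeneous (k + 1) (Fin.cons y s : Fin (m + 1) → R) =
      (x - y) * completeHomogeneous k (Fin.cons x (Fin.cons y s) : Fin (m + 2) → R) := by
  induction k with
  | zero =>
    simp only [completeHomogeneous_succ_cons, completeHomogeneous_zero]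
    ring
  | succ k ih =>
    rw [completeHomogeneous_succ_cons (k + 1) x s, completeHomogeneous_succ_cons (k + 1) y s,
      completeHomogeneous_succ_cons k x (Fin.cons y s)]
    linear_combination x * ih

end CompleteHomogeneous

section Interpolation

open Polynomial

variable {R : Type*} [CommRing R]

theorem coeff_prod_X_sub_C_card {ι : Type*} [Fintype ι] (s : ι → R) :
    (∏ j, (X - C (s j))).coeff (Fintype.card ι) = 1 := by
  nontriviality R
  simpa using (monic_prod_X_sub_C s Finset.univ).coeff_natDegree

theorem prod_X_sub_C_mem_degreeLT {ι : Type*} [Fintype ι] (s : ι → R) :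
    ∏ j, (X - C (s j)) ∈ degreeLT R (Fintype.card ι + 1) := by
  nontriviality R
  have hdegree : (∏ j, (X - C (s j))).natDegree = Fintype.card ι := by simp
  exact mem_degreeLT.mpr <| degree_le_natDegree.trans_lt <|
    Nat.cast_lt.mpr <| hdegree.trans_lt (Nat.lt_succ_self _)

theorem add_smul_prod_X_sub_C_mem_degreeLT {m : ℕ} {r : R[X]} (hr : r ∈ degreeLT R m) (a : R)
    (s : Fin m → R) : r + a • ∏ j, (X - C (s j)) ∈ degreeLT R (m + 1) := by
  have hs := prod_X_sub_C_mem_degreeLT s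
  rw [Fintype.card_fin] at hs
  exact add_mem (degreeLT_mono m.le_succ hr) (Submodule.smul_mem _ a hs)

theorem exists_pow_eq_eval_add_completeHomogeneous_mul_prod {m : ℕ} (s : Fin m → R) (k : ℕ) :
    ∃ r ∈ degreeLT R m, ∀ x, x ^ (m + k) =
      r.eval x + completeHomogeneous k (Fin.cons x s : Fin (m + 1) → R) * ∏ j, (x - s j) := by
  induction s using Fin.consInduction generalizing k with
  | elim0 => exact ⟨0, zero_mem _, fun x => by simp [completeHomogeneous_of_unique]⟩
  | @cons m y s ih =>
    obtain ⟨r, hr, hpow⟩ := ih (k + 1)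
    let a := completeHomogeneous (k + 1) (Fin.cons y s : Fin (m + 1) → R)
    refine ⟨r + a • ∏ j, (X - C (s j)), add_smul_prod_X_sub_C_mem_degreeLT hr a s, fun x => ?_⟩
    rw [add_assoc, add_comm 1 k, hpow, Fin.prod_univ_succ]
    simp only [eval_add, eval_smul, eval_prod, eval_sub, eval_X, eval_C, smul_eq_mul,
      Fin.cons_zero, Fin.cons_succ, a]
    linear_combination (∏ j, (x - s j)) * completeHomogeneous_cons_sub_cons k x y s

theorem exists_coeff_eq_completeHomogeneous_and_eval_eq_pow {n : ℕ} (t : Fin (n + 1) → R) (k : ℕ) :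
    ∃ p ∈ degreeLT R (n + 1), p.coeff n = completeHomogeneous k t ∧
      ∀ i, p.eval (t i) = t i ^ (n + k) := by
  induction t using Fin.consCases with | _ x s
  obtain ⟨r, hr, hpow⟩ := exists_pow_eq_eval_add_completeHomogeneous_mul_prod s k
  let a := completeHomogeneous k (Fin.cons x s : Fin (n + 1) → R)
  refine ⟨r + a • ∏ j, (X - C (s j)), add_smul_prod_X_sub_C_mem_degreeLT hr a s, ?_, fun i => ?_⟩
  · have hs := coeff_prod_X_sub_C_card s
    rw [Fintype.card_fin] at hs
    rw [coeff_add, coeff_smul, hs, coeff_eq_zero_of_degree_lt (mem_degreeLT.mp hr), zero_add,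
      smul_eq_mul, mul_one]
  · rw [hpow]
    simp only [eval_add, eval_smul, eval_prod, eval_sub, eval_X, eval_C, smul_eq_mul]
    cases i using Fin.cases with
    | zero => rfl
    | succ j =>
      have hprod : ∏ l, (s j - s l) = 0 := Finset.prod_eq_zero (Finset.mem_univ j) (sub_self _)
      rw [Fin.cons_succ, hprod, mul_zero, mul_zero]

-- `Matrix.projVandermonde 1 t` has `t i ^ (n - j)` as its `(i, j)` entry.
theorem det_updateCol_projVandermonde_eval {n : ℕ} (t : Fin (n + 1) → R) {p : R[X]}
    (hp : p ∈ degreeLT R (n + 1)) :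
    ((Matrix.projVandermonde 1 t).updateCol 0 fun i => p.eval (t i)).det =
      p.coeff n * ∏ i, ∏ j ∈ Finset.Ioi i, (t i - t j) := by
  have heval : ∀ i, p.eval (t i) =
      ∑ j : Fin (n + 1), p.coeff j.rev • Matrix.projVandermonde 1 t i j := by
    intro i
    rw [eval_eq_sum_degreeLTEquiv hp, ← Equiv.sum_comp Fin.revPerm]
    simp [degreeLTEquiv, Matrix.projVandermonde_apply]
  rw [funext heval, Matrix.det_updateCol_sum _ _ fun j : Fin (n + 1) => p.coeff j.rev,
    Matrix.det_projVandermonde]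
  simp only [Fin.rev_zero, Fin.val_last, Pi.one_apply, one_mul, smul_eq_mul]

end Interpolation

theorem det_jacobi_trudy_one_row {R : Type*} [CommRing R] (n : ℕ) (hn : 1 ≤ n)
    (t : Fin (n + 1) → R) (k : ℕ) :
    (Matrix.of fun i j : Fin (n + 1) =>
        if (j : ℕ) = 0 then t i ^ (n + k) else t i ^ (n - (j : ℕ))).det =
      completeHomogeneous k t *
        ∏ i : Fin (n + 1), ∏ j ∈ Finset.univ.filter (fun j => i < j), (t i - t j) := by
  obtain ⟨p, hp, hcoeff, heval⟩ := exists_coeff_eq_completeHomogeneous_and_eval_eq_pow t k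
  have hmatrix : (Matrix.of fun i j : Fin (n + 1) =>
      if (j : ℕ) = 0 then t i ^ (n + k) else t i ^ (n - (j : ℕ))) =
      (Matrix.projVandermonde 1 t).updateCol 0 fun i => p.eval (t i) := by
    ext i j
    cases j using Fin.cases with
    | zero => simp [heval]
    | succ j => simp [Matrix.projVandermonde_apply, Fin.val_rev]
  simp only [hmatrix, det_updateCol_projVandermonde_eval t hp, hcoeff, Finset.filter_lt_eq_Ioi]
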